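/- arXiv:2206.04842 — 2 statements merged into one kernel-verified Lean document; each statement's English description precedes it below -/
import Mathlib

section
/- Let a ≥ 4 and let d be a positive integer with ⌈d/a⌉ = 31 or ⌈d/a⌉ ≥ 63, and with h_d^{(a)} ≤ 3. If d ≢ −3 (mod a), then for all n ≥ 1, q_d^{(a)}(n) ≥ Q_d^{(a,-)}(n). If d ≡ −3 (mod a), then q_d^{(a)}(n) ≥ Q_d^{(a,-)}(n) for all n ≥ 1 with n ≠ d + 3 + a. -/
/-- `q_d^{(a)}(n)`: the number of partitions of `n` into parts of size at least `a`
such that successive parts differ by at least `d`. -/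
noncomputable def gapCount (d a n : ℕ) : ℕ :=
  Nat.card {p : n.Partition //
    (∀ x ∈ p.parts, a ≤ x) ∧
    List.Chain' (fun x y => x + d ≤ y) (p.parts.sort (· ≤ ·))}

/-- `Q_d^{(a)}(n)`: the number of partitions of `n` into parts congruent to `a` or `-a`
modulo `d + 3`. -/
noncomputable def congCount (d a n : ℕ) : ℕ :=
  Nat.card {p : n.Partition //
    ∀ x ∈ p.parts, x ≡ a [MOD d + 3] ∨ x + a ≡ 0 [MOD d + 3]}

/-- `Q_d^{(a,-)}(n)`: as `congCount`, but no part equals `d + 3 - a`. -/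
noncomputable def congMinusCount (d a n : ℕ) : ℕ :=
  Nat.card {p : n.Partition //
    (∀ x ∈ p.parts, x ≡ a [MOD d + 3] ∨ x + a ≡ 0 [MOD d + 3]) ∧
    ∀ x ∈ p.parts, x ≠ d + 3 - a}

/-- `Q_d^{(a,-,-)}(n)`: as `congCount`, but no part equals `a` or `d + 3 - a`. -/
noncomputable def congMinusMinusCount (d a n : ℕ) : ℕ :=
  Nat.card {p : n.Partition //
    (∀ x ∈ p.parts, x ≡ a [MOD d + 3] ∨ x + a ≡ 0 [MOD d + 3]) ∧
    (∀ x ∈ p.parts, x ≠ a) ∧ ∀ x ∈ p.parts, x ≠ d + 3 - a}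

/-- `ρ(R; n)`: the number of partitions of `n` all of whose parts lie in `R`. -/
noncomputable def rhoCount (R : Set ℕ) (n : ℕ) : ℕ :=
  Nat.card {p : n.Partition // ∀ x ∈ p.parts, x ∈ R}

/-- `h_n^{(a)}`: the least nonnegative residue of `-n` modulo `a`,
so that `n + negRes n a = a * ⌈n/a⌉`. -/
def negRes (n a : ℕ) : ℕ := (a - n % a) % a

/-- `⌈d/a⌉` for natural numbers. -/
def cdiv (d a : ℕ) : ℕ := (d + a - 1) / a

/-- `cumPartCount j w` counts the partitions of integers at most `w` into parts from
`{2, …, j + 1}`. -/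
def cumPartCount : ℕ → ℕ → ℕ
  | 0, _ => 1
  | j + 1, w => ∑ i ∈ Finset.range (w / (j + 2) + 1), cumPartCount j (w - i * (j + 2))

lemma cumPartCount_succ_of_lt {j w : ℕ} (h : w < j + 2) :
    cumPartCount (j + 1) w = cumPartCount j w := by
  simp [cumPartCount, Nat.div_eq_of_lt h]

lemma cumPartCount_succ_of_le {j w : ℕ} (h : j + 2 ≤ w) :
    cumPartCount (j + 1) w = cumPartCount j w + cumPartCount (j + 1) (w - (j + 2)) := by
  have hq : w / (j + 2) = (w - (j + 2)) / (j + 2) + 1 := by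
    rw [Nat.div_eq_sub_div (by omega) h]
  simp only [cumPartCount]
  rw [hq, Finset.sum_range_succ', add_comm]
  congr 1
  · simp
  · refine Finset.sum_congr rfl fun i _ => ?_
    congr 1
    rw [add_mul, one_mul, Nat.sub_sub, add_comm]

lemma card_le_cumPartCount (j : ℕ) : ∀ (w : ℕ) (F : Finset (Multiset ℕ)),
    (∀ s ∈ F, (∀ x ∈ s, 2 ≤ x ∧ x ≤ j + 1) ∧ s.sum ≤ w) → F.card ≤ cumPartCount j w := by
  induction j with
  | zero =>
    intro w F hF
    refine Finset.card_le_one.2 fun s hs t ht => ?_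
    have key : ∀ s ∈ F, s = 0 := fun s hs =>
      Multiset.eq_zero_of_forall_notMem fun x hx => by
        have := (hF s hs).1 x hx
        omega
    rw [key s hs, key t ht]
  | succ j ihj =>
    intro w
    induction w using Nat.strong_induction_on with
    | _ w ihw =>
      intro F hF
      by_cases h : j + 2 ≤ w
      · rw [cumPartCount_succ_of_le h, ← Finset.card_filter_add_card_filter_not
          (fun s => j + 2 ∈ s), add_comm]
        refine add_le_add (ihj w _ fun s hs => ?_) ?_
        · rw [Finset.mem_filter] at hs
          refine ⟨fun x hx => ?_, (hF s hs.1).2⟩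
          have h1 := (hF s hs.1).1 x hx
          have h2 : x ≠ j + 2 := fun e => hs.2 (e ▸ hx)
          omega
        · rw [← Finset.card_image_of_injOn (f := fun s : Multiset ℕ => s.erase (j + 2))]
          · refine ihw _ (by omega) _ fun s hs => ?_
            obtain ⟨t, ht, rfl⟩ := Finset.mem_image.1 hs
            rw [Finset.mem_filter] at ht
            refine ⟨fun x hx => (hF t ht.1).1 x (Multiset.mem_of_mem_erase hx), ?_⟩
            have h1 := Multiset.sum_erase ht.2
            have h2 := (hF t ht.1).2
            omega
          · intro s hs t ht hst
            have hs' := (Finset.mem_filter.1 hs).2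
            have ht' := (Finset.mem_filter.1 ht).2
            rw [← Multiset.cons_erase hs', ← Multiset.cons_erase ht']
            exact congrArg _ hst
      · rw [cumPartCount_succ_of_lt (by omega)]
        refine ihj w F fun s hs => ⟨fun x hx => ?_, (hF s hs).2⟩
        have h1 := (hF s hs).1 x hx
        have h2 := Multiset.single_le_sum (fun _ _ => Nat.zero_le _) x hx
        have h3 := (hF s hs).2
        omega

lemma cumPartCount_le_pow_mul_prod {x : ℝ} (hx0 : 0 < x) (hx1 : x < 1) (j : ℕ) : ∀ w : ℕ,
    (cumPartCount j w : ℝ) ≤ x⁻¹ ^ w * ∏ i ∈ Finset.range j, (1 - x ^ (i + 2))⁻¹ := by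
  have hpos : ∀ i : ℕ, 0 < 1 - x ^ (i + 2) := fun i =>
    sub_pos.2 (pow_lt_one₀ hx0.le hx1 (by omega))
  have hP : ∀ j : ℕ, 0 < ∏ i ∈ Finset.range j, (1 - x ^ (i + 2))⁻¹ := fun j =>
    Finset.prod_pos fun i _ => inv_pos.2 (hpos i)
  induction j with
  | zero =>
    intro w
    simpa [cumPartCount] using one_le_pow₀ (one_le_inv_iff₀.2 ⟨hx0, hx1.le⟩)
  | succ j ihj =>
    have hsplit : ∏ i ∈ Finset.range j, (1 - x ^ (i + 2))⁻¹ =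
        (1 - x ^ (j + 2)) * ∏ i ∈ Finset.range (j + 1), (1 - x ^ (i + 2))⁻¹ := by
      rw [Finset.prod_range_succ]
      field_simp [(hpos j).ne']
    intro w
    induction w using Nat.strong_induction_on with
    | _ w ihw =>
      set P := ∏ i ∈ Finset.range (j + 1), (1 - x ^ (i + 2))⁻¹ with hPdef
      have h1 := ihj w
      rw [hsplit] at h1
      have hPp : 0 < P := hP (j + 1)
      have hxw : 0 < x⁻¹ ^ w := by positivity
      by_cases h : j + 2 ≤ w
      · rw [cumPartCount_succ_of_le h]
        have h2 := ihw (w - (j + 2)) (by omega)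
        have h3 : x⁻¹ ^ (w - (j + 2)) = x⁻¹ ^ w * x ^ (j + 2) := by
          rw [← Nat.sub_add_cancel h, pow_add]
          simp [hx0.ne']
        rw [h3] at h2
        push_cast
        nlinarith
      · rw [cumPartCount_succ_of_lt (by omega)]
        have : 0 < x⁻¹ ^ w * (x ^ (j + 2) * P) := by positivity
        nlinarith

lemma prod_range_div_eq_choose (r : ℕ) : ∀ m : ℕ,
    ∏ i ∈ Finset.range m, ((r + 3 + i : ℝ) / (i + 2)) = (r + 2 + m).choose (m + 1) / (r + 2) := by
  intro m
  induction m with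
  | zero =>
    have : (r + 2 : ℝ) ≠ 0 := by positivity
    simp [this]
  | succ m ih =>
    rw [Finset.prod_range_succ, ih]
    have h := Nat.add_one_mul_choose_eq (r + 2 + m) (m + 1)
    have h' : ((r + 2 + m + 1 : ℝ)) * (r + 2 + m).choose (m + 1) =
        (r + 2 + (m + 1)).choose (m + 1 + 1) * (m + 1 + 1) := by exact_mod_cast h
    have h1 : (r + 2 : ℝ) ≠ 0 := by positivity
    have h2 : (m + 2 : ℝ) ≠ 0 := by positivity
    field_simp
    linarith

/-- An exponential bound for the count of partitions, with a free parameter `s = r + 1`. -/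
lemma cumPartCount_le_exp (r j w : ℕ) :
    (cumPartCount j w : ℝ) ≤
      ((r + 2 : ℝ) / (r + 1)) ^ w * ((2 * r + 2).choose (r + 1) / (r + 2)) * Real.exp (r + 1) := by
  set x : ℝ := (r + 1) / (r + 2) with hx
  have hr : (0 : ℝ) ≤ r := Nat.cast_nonneg r
  have hx0 : 0 < x := by positivity
  have hx1 : x < 1 := by rw [hx, div_lt_one (by positivity)]; linarith
  have hinv : x⁻¹ = 1 + 1 / (r + 1) := by rw [hx]; field_simp; ring
  have hinv' : x⁻¹ = (r + 2) / (r + 1) := by rw [hx, inv_div]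
  have hbern : ∀ i : ℕ, x ^ i ≤ (r + 1) / (r + 1 + i) := fun i => by
    have h := one_add_mul_le_pow (a := 1 / ((r : ℝ) + 1)) (by
      have : (0 : ℝ) ≤ 1 / (r + 1) := by positivity
      linarith) i
    rw [← hinv, inv_pow] at h
    have h2 : (1 + (i : ℝ) * (1 / (r + 1))) = ((r + 1 + i) / (r + 1)) := by field_simp
    rw [h2] at h
    have h3 := inv_anti₀ (by positivity) h
    rwa [inv_inv, inv_div] at h3
  have hpos : ∀ i : ℕ, 0 < 1 - x ^ (i + 2) := fun i =>
    sub_pos.2 (pow_lt_one₀ hx0.le hx1 (by omega))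
  have hhead : ∏ i ∈ Finset.range r, (1 - x ^ (i + 2))⁻¹ ≤
      (2 * r + 2).choose (r + 1) / (r + 2) := by
    have h := prod_range_div_eq_choose r r
    rw [show r + 2 + r = 2 * r + 2 by ring] at h
    rw [← h]
    refine Finset.prod_le_prod (fun i _ => (inv_pos.2 (hpos i)).le) fun i _ => ?_
    have hb := hbern (i + 2)
    rw [inv_le_comm₀ (hpos i) (by positivity), inv_div]
    have : ((i : ℝ) + 2) / (r + 3 + i) = 1 - (r + 1) / (r + 1 + ((i + 2 : ℕ) : ℝ)) := by
      push_cast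
      field_simp
      ring
    linarith
  have hhalf : x ^ (r + 1) ≤ 1 / 2 := by
    refine (hbern (r + 1)).trans (le_of_eq ?_)
    push_cast
    field_simp
    ring
  have hgeom : ∀ m : ℕ, ∑ i ∈ Finset.range m, x ^ i ≤ r + 2 := fun m => by
    have h : (1 - x) * ∑ i ∈ Finset.range m, x ^ i = 1 - x ^ m := mul_neg_geom_sum x m
    have h1 : 1 - x = 1 / (r + 2) := by rw [hx]; field_simp; ring
    rw [h1, div_mul_eq_mul_div, one_mul, div_eq_iff (by positivity)] at h
    have h2 : 0 < x ^ m := by positivity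
    nlinarith
  have htail : ∀ m : ℕ, ∏ i ∈ Finset.range m, (1 - x ^ (r + i + 2))⁻¹ ≤ Real.exp (r + 1) := by
    intro m
    have h1 : ∏ i ∈ Finset.range m, (1 - x ^ (r + i + 2))⁻¹ ≤
        ∏ i ∈ Finset.range m, Real.exp (2 * x ^ (r + i + 2)) := by
      refine Finset.prod_le_prod (fun i _ => (inv_pos.2 (hpos _)).le) fun i _ => ?_
      set u := x ^ (r + i + 2) with hu
      have hu0 : 0 < u := by positivity
      have hu1 : u ≤ 1 / 2 := (pow_le_pow_of_le_one hx0.le hx1.le (by omega)).trans hhalf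
      have h2 := Real.add_one_le_exp (2 * u)
      refine le_trans ?_ h2
      rw [inv_le_iff_one_le_mul₀ (by linarith)]
      nlinarith
    refine h1.trans ?_
    rw [← Real.exp_sum, Real.exp_le_exp]
    have h2 : ∑ i ∈ Finset.range m, 2 * x ^ (r + i + 2) =
        2 * x ^ (r + 1) * (x * ∑ i ∈ Finset.range m, x ^ i) := by
      rw [Finset.mul_sum, Finset.mul_sum]
      refine Finset.sum_congr rfl fun i _ => ?_
      ring
    have h3 : x * ∑ i ∈ Finset.range m, x ^ i ≤ r + 1 := by
      calc x * ∑ i ∈ Finset.range m, x ^ i ≤ x * (r + 2) := by gcongr; exact hgeom m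
        _ = r + 1 := by rw [hx]; field_simp
    have h4 : 0 ≤ x * ∑ i ∈ Finset.range m, x ^ i := by positivity
    rw [h2]
    nlinarith
  have hprod : ∏ i ∈ Finset.range j, (1 - x ^ (i + 2))⁻¹ ≤
      (2 * r + 2).choose (r + 1) / (r + 2) * Real.exp (r + 1) := by
    calc ∏ i ∈ Finset.range j, (1 - x ^ (i + 2))⁻¹
        ≤ ∏ i ∈ Finset.range (r + j), (1 - x ^ (i + 2))⁻¹ := by
          refine Finset.prod_le_prod_of_subset_of_one_le
            (Finset.range_subset_range.2 (by omega)) (fun i _ => (inv_pos.2 (hpos i)).le)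
            fun i _ _ => (one_le_inv₀ (hpos i)).2 ?_
          have : 0 < x ^ (i + 2) := by positivity
          linarith
      _ ≤ _ := by
          rw [Finset.prod_range_add]
          exact mul_le_mul hhead (htail j)
            (Finset.prod_nonneg fun i _ => (inv_pos.2 (hpos _)).le) (by positivity)
  calc (cumPartCount j w : ℝ) ≤ x⁻¹ ^ w * ∏ i ∈ Finset.range j, (1 - x ^ (i + 2))⁻¹ :=
        cumPartCount_le_pow_mul_prod hx0 hx1 j w
    _ ≤ x⁻¹ ^ w * ((2 * r + 2).choose (r + 1) / (r + 2) * Real.exp (r + 1)) := by gcongr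
    _ = _ := by rw [hinv', mul_assoc]

/-- Distinct lists with the gap condition are distinct partitions. -/
lemma card_le_gapCount {d a n : ℕ} (ha : 0 < a) (F : Finset (List ℕ))
    (hF : ∀ l ∈ F, (∀ x ∈ l, a ≤ x) ∧ l.IsChain (fun x y => x + d ≤ y) ∧ l.sum = n) :
    F.card ≤ gapCount d a n := by
  have hsort : ∀ l ∈ F, (l : Multiset ℕ).sort (· ≤ ·) = l := fun l hl => by
    rw [Multiset.coe_sort]
    refine List.mergeSort_of_pairwise ?_
    have h := (hF l hl).2.1.imp (S := (· ≤ ·)) fun x y h => by omega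
    simpa using h.pairwise
  let f : F → {p : n.Partition // (∀ x ∈ p.parts, a ≤ x) ∧
      List.Chain' (fun x y => x + d ≤ y) (p.parts.sort (· ≤ ·))} := fun l =>
    ⟨⟨(l.1 : Multiset ℕ), fun {x} hx => ha.trans_le ((hF l.1 l.2).1 x (by simpa using hx)),
        by simpa using (hF l.1 l.2).2.2⟩,
      fun x hx => (hF l.1 l.2).1 x (by simpa using hx),
      by rw [hsort l.1 l.2]; exact (hF l.1 l.2).2.1⟩
  have hf : Function.Injective f := fun l m h => by
    have h1 : (l.1 : Multiset ℕ) = (m.1 : Multiset ℕ) :=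
      congrArg (fun p => p.1.parts) h
    apply Subtype.ext
    rw [← hsort l.1 l.2, ← hsort m.1 m.2, h1]
  have := Nat.card_le_card_of_injective f hf
  simpa [gapCount] using this

lemma pow_le_pow_sub_add (k N : ℕ) (h : k + 2 ≤ N) :
    N ^ (k + 1) ≤ (k + 1) * (k + 2) * N ^ k + (N - (k + 2)) ^ (k + 1) := by
  obtain ⟨M, rfl⟩ := Nat.exists_eq_add_of_le' h
  rw [Nat.add_sub_cancel]
  have key : ∀ j : ℕ, (M + (k + 2)) ^ (j + 1) ≤
      (j + 1) * (k + 2) * (M + (k + 2)) ^ j + M ^ (j + 1) := by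
    intro j
    induction j with
    | zero => simp; omega
    | succ j ih =>
      have h1 : M ^ (j + 1) ≤ (M + (k + 2)) ^ (j + 1) := Nat.pow_le_pow_left (by omega) _
      calc (M + (k + 2)) ^ (j + 1 + 1)
          = (M + (k + 2)) * (M + (k + 2)) ^ (j + 1) := by ring
        _ ≤ (M + (k + 2)) * ((j + 1) * (k + 2) * (M + (k + 2)) ^ j + M ^ (j + 1)) := by gcongr
        _ = (j + 1) * (k + 2) * (M + (k + 2)) ^ (j + 1) + (k + 2) * M ^ (j + 1)
            + M ^ (j + 1 + 1) := by ring
        _ ≤ (j + 1) * (k + 2) * (M + (k + 2)) ^ (j + 1) + (k + 2) * (M + (k + 2)) ^ (j + 1)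
            + M ^ (j + 1 + 1) := by gcongr
        _ = _ := by ring
  exact key k

/-- There are at least `N ^ k / ((k + 1)! k!)` sequences of `k + 1` parts, with gaps at least `d`,
whose sum exceeds the least possible one by `N`. -/
lemma exists_finset_gap_lists (d k : ℕ) : ∀ N b : ℕ, ∃ F : Finset (List ℕ),
    (∀ l ∈ F, l ≠ [] ∧ (∀ x ∈ l, b ≤ x) ∧ l.IsChain (fun x y => x + d ≤ y) ∧
      l.sum = (k + 1) * b + d * ∑ i ∈ Finset.range (k + 1), i + N) ∧
    N ^ k ≤ (k + 1).factorial * k.factorial * F.card := by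
  induction k with
  | zero =>
    intro N b
    refine ⟨{[b + N]}, ?_, by simp⟩
    simp
  | succ k ihk =>
    intro N
    induction N using Nat.strong_induction_on with
    | _ N ihN =>
      intro b
      obtain ⟨F, hF, hFc⟩ := ihk N (b + d)
      have hcons : ∀ l ∈ F.image (List.cons b), l ≠ [] ∧ (∀ x ∈ l, b ≤ x) ∧
          l.IsChain (fun x y => x + d ≤ y) ∧
          l.sum = (k + 1 + 1) * b + d * ∑ i ∈ Finset.range (k + 1 + 1), i + N := by
        intro l hl
        obtain ⟨m, hm, rfl⟩ := Finset.mem_image.1 hl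
        obtain ⟨-, h1, h2, h3⟩ := hF m hm
        refine ⟨by simp, ?_, ?_, ?_⟩
        · intro x hx
          rcases List.mem_cons.1 hx with rfl | hx
          · exact le_rfl
          · have := h1 x hx
            omega
        · exact List.IsChain.cons h2 fun y hy => h1 y (List.mem_of_mem_head? hy)
        · rw [List.sum_cons, h3, Finset.sum_range_succ _ (k + 1)]
          ring
      have hcard : (F.image (List.cons b)).card = F.card :=
        Finset.card_image_of_injective _ fun _ _ h => (List.cons.inj h).2
      have hfac : (k + 1 + 1).factorial * (k + 1).factorial =
          (k + 1) * (k + 2) * ((k + 1).factorial * k.factorial) := by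
        rw [Nat.factorial_succ (k + 1), Nat.factorial_succ k]
        ring
      by_cases hN : k + 2 ≤ N
      · obtain ⟨G, hG, hGc⟩ := ihN (N - (k + 2)) (by omega) (b + 1)
        refine ⟨F.image (List.cons b) ∪ G, ?_, ?_⟩
        · intro l hl
          rcases Finset.mem_union.1 hl with hl | hl
          · exact hcons l hl
          · obtain ⟨h0, h1, h2, h3⟩ := hG l hl
            refine ⟨h0, fun x hx => (Nat.le_succ b).trans (h1 x hx), h2, ?_⟩
            rw [h3]
            obtain ⟨M, rfl⟩ := Nat.exists_eq_add_of_le' hN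
            rw [Nat.add_sub_cancel]
            ring
        · have hdisj : Disjoint (F.image (List.cons b)) G := by
            rw [Finset.disjoint_left]
            intro l hl hl'
            obtain ⟨m, -, rfl⟩ := Finset.mem_image.1 hl
            have := (hG _ hl').2.1 b (by simp)
            omega
          rw [Finset.card_union_of_disjoint hdisj, hcard, mul_add]
          refine (pow_le_pow_sub_add k N hN).trans (add_le_add ?_ hGc)
          rw [hfac, mul_assoc ((k + 1) * (k + 2))]
          gcongr
      · refine ⟨F.image (List.cons b), hcons, ?_⟩
        rw [hcard, hfac, pow_succ', mul_assoc ((k + 1) * (k + 2))]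
        refine Nat.mul_le_mul ?_ hFc
        nlinarith

lemma pow_le_mul_gapCount {d a n k N : ℕ} (ha : 0 < a)
    (h : (k + 1) * (2 * a + d * k) + 2 * N ≤ 2 * n) :
    N ^ k ≤ (k + 1).factorial * k.factorial * gapCount d a n := by
  have hs : (∑ i ∈ Finset.range (k + 1), i) * 2 = (k + 1) * k := Finset.sum_range_id_mul_two _
  have hle : (k + 1) * a + d * ∑ i ∈ Finset.range (k + 1), i + N ≤ n := by nlinarith
  obtain ⟨M, hM⟩ := Nat.exists_eq_add_of_le hle
  obtain ⟨F, hF, hFc⟩ := exists_finset_gap_lists d k (N + M) a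
  have h1 := card_le_gapCount (d := d) (n := n) ha F fun l hl =>
    ⟨(hF l hl).2.1, (hF l hl).2.2.1, by rw [(hF l hl).2.2.2, hM]; ring⟩
  calc N ^ k ≤ (N + M) ^ k := Nat.pow_le_pow_left (by omega) k
    _ ≤ _ := hFc
    _ ≤ _ := by gcongr

section CongruenceParts

variable {d a : ℕ}

lemma two_mul_div_of_modEq {x : ℕ} (ha : 0 < a) (had : 31 * a ≤ d + 3)
    (hx : x ≡ a [MOD d + 3] ∨ x + a ≡ 0 [MOD d + 3]) (hxa : x ≠ a) (hxd : x ≠ d + 3 - a)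
    (hpos : 0 < x) : ∃ j, 1 ≤ j ∧
      (x = j * (d + 3) + a ∧ 2 * x / (d + 3) = 2 * j ∨
        x + a = (j + 1) * (d + 3) ∧ 2 * x / (d + 3) = 2 * j + 1) := by
  rcases hx with hx | hx
  · have h1 : x % (d + 3) = a := by
      rw [hx, Nat.mod_eq_of_lt (by omega)]
    have h2 := Nat.div_add_mod x (d + 3)
    rw [h1] at h2
    refine ⟨x / (d + 3), ?_, Or.inl ⟨by rw [mul_comm]; exact h2.symm, ?_⟩⟩
    · rcases Nat.eq_zero_or_pos (x / (d + 3)) with h | h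
      · rw [h] at h2
        omega
      · exact h
    · generalize x / (d + 3) = j at h2
      rw [Nat.div_eq_of_lt_le] <;> nlinarith
  · obtain ⟨j, hj⟩ := (Nat.modEq_zero_iff_dvd.1 hx)
    match j, hj with
    | 0, hj => omega
    | 1, hj => omega
    | j + 2, hj =>
      refine ⟨j + 1, by omega, Or.inr ⟨by rw [hj]; ring, ?_⟩⟩
      rw [Nat.div_eq_of_lt_le] <;> nlinarith

/-- Recovers a part congruent to `± a` modulo `d + 3` from the integer part of `2 x / (d + 3)`. -/
def partOfIndex (d a i : ℕ) : ℕ :=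
  if i % 2 = 0 then i / 2 * (d + 3) + a else (i / 2 + 1) * (d + 3) - a

lemma partOfIndex_two_mul_div {x : ℕ} (ha : 0 < a) (had : 31 * a ≤ d + 3)
    (hx : x ≡ a [MOD d + 3] ∨ x + a ≡ 0 [MOD d + 3]) (hxa : x ≠ a) (hxd : x ≠ d + 3 - a)
    (hpos : 0 < x) : partOfIndex d a (2 * x / (d + 3)) = x := by
  obtain ⟨j, -, ⟨h1, h2⟩ | ⟨h1, h2⟩⟩ := two_mul_div_of_modEq ha had hx hxa hxd hpos
  · rw [h2, partOfIndex, if_pos (by omega), h1, Nat.mul_div_cancel_left _ two_pos]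
  · rw [h2, partOfIndex, if_neg (by omega), show (2 * j + 1) / 2 = j by omega, ← h1,
      Nat.add_sub_cancel]

/-- A partition is determined by its sum and its parts other than a fixed positive one. -/
lemma Nat.Partition.ext_of_filter_ne {n : ℕ} {p q : n.Partition} (ha : 0 < a)
    (h : p.parts.filter (· ≠ a) = q.parts.filter (· ≠ a)) : p = q := by
  have key : ∀ p : n.Partition,
      p.parts = Multiset.replicate (p.parts.count a) a + p.parts.filter (· ≠ a) := fun p => by
    conv_lhs => rw [← Multiset.filter_add_not (· = a) p.parts]
    rw [Multiset.filter_eq']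
  have hsum : ∀ p : n.Partition,
      n = p.parts.count a * a + (p.parts.filter (· ≠ a)).sum := fun p => by
    conv_lhs => rw [← p.parts_sum, key p]
    simp
  have hc : p.parts.count a = q.parts.count a := by
    have h1 := hsum p
    have h2 := hsum q
    rw [h] at h1
    exact Nat.eq_of_mul_eq_mul_right ha (by omega)
  apply Nat.Partition.ext
  rw [key p, key q, hc, h]

lemma congMinusCount_le_cumPartCount {n : ℕ} (ha : 0 < a) (had : 31 * a ≤ d + 3) :
    congMinusCount d a n ≤ cumPartCount (2 * n / (d + 3)) (2 * n / (d + 3)) := by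
  classical
  set P := {p : n.Partition //
    (∀ x ∈ p.parts, x ≡ a [MOD d + 3] ∨ x + a ≡ 0 [MOD d + 3]) ∧
    ∀ x ∈ p.parts, x ≠ d + 3 - a}
  let f : P → Multiset ℕ := fun p => (p.1.parts.filter (· ≠ a)).map fun x => 2 * x / (d + 3)
  have hinv : ∀ p : P, (f p).map (partOfIndex d a) = p.1.parts.filter (· ≠ a) := fun p => by
    rw [Multiset.map_map]
    refine (Multiset.map_congr rfl fun x hx => ?_).trans (Multiset.map_id _)
    rw [Multiset.mem_filter] at hx
    exact partOfIndex_two_mul_div ha had (p.2.1 x hx.1) hx.2 (p.2.2 x hx.1)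
      (p.1.parts_pos hx.1)
  have hf : Function.Injective f := fun p q h => Subtype.ext <|
    Nat.Partition.ext_of_filter_ne ha (by rw [← hinv p, ← hinv q, h])
  have hcard : congMinusCount d a n = (Finset.univ.image f).card := by
    rw [Finset.card_image_of_injective _ hf, Finset.card_univ, ← Nat.card_eq_fintype_card]
    rfl
  rw [hcard]
  refine card_le_cumPartCount _ _ _ fun s hs => ?_
  obtain ⟨p, -, rfl⟩ := Finset.mem_image.1 hs
  have hsum : (f p).sum * (d + 3) ≤ 2 * n := by
    have h1 : (p.1.parts.filter (· ≠ a)).sum ≤ n := by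
      conv_rhs => rw [← p.1.parts_sum, ← Multiset.filter_add_not (· ≠ a) p.1.parts,
        Multiset.sum_add]
      exact Nat.le_add_right _ _
    refine le_trans ?_ (Nat.mul_le_mul_left 2 h1)
    have h2 : 2 * (p.1.parts.filter (· ≠ a)).sum =
        ((p.1.parts.filter (· ≠ a)).map fun x => 2 * x).sum := by
      rw [Multiset.sum_map_mul_left, Multiset.map_id']
    rw [h2, ← Multiset.sum_map_mul_right]
    exact Multiset.sum_map_le_sum_map _ _ fun x _ => Nat.div_mul_le_self _ _
  have hsum' : (f p).sum ≤ 2 * n / (d + 3) := (Nat.le_div_iff_mul_le (by omega)).2 hsum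
  refine ⟨fun x hx => ⟨?_, ?_⟩, hsum'⟩
  · obtain ⟨y, hy, rfl⟩ := Multiset.mem_map.1 hx
    rw [Multiset.mem_filter] at hy
    obtain ⟨j, hj, h⟩ := two_mul_div_of_modEq ha had (p.2.1 y hy.1) hy.2 (p.2.2 y hy.1)
      (p.1.parts_pos hy.1)
    omega
  · have := Multiset.single_le_sum (fun _ _ => Nat.zero_le _) x hx
    omega

lemma congMinusCount_eq_zero {n : ℕ} (ha : 0 < a) (had : 31 * a ≤ d + 3) (hn : 1 ≤ n)
    (hna : n < a) : congMinusCount d a n = 0 := by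
  rw [congMinusCount, Nat.card_eq_zero]
  refine Or.inl ⟨fun p => ?_⟩
  obtain ⟨x, hx⟩ : ∃ x, x ∈ p.1.parts := Multiset.exists_mem_of_ne_zero fun h => by
    have := p.1.parts_sum
    rw [h, Multiset.sum_zero] at this
    omega
  have hxn : x ≤ n := p.1.parts_sum ▸ Multiset.single_le_sum (fun _ _ => Nat.zero_le _) x hx
  obtain ⟨j, hj, h⟩ := two_mul_div_of_modEq ha had (p.2.1 x hx) (by omega) (p.2.2 x hx)
    (p.1.parts_pos hx)
  rcases h with ⟨h, -⟩ | ⟨h, -⟩ <;> nlinarith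

lemma congMinusCount_le_one {n : ℕ} (ha : 0 < a) (had : 31 * a ≤ d + 3) (hn : n < 2 * a + d)
    (hex : ¬ (a ∣ d + 3 ∧ n = d + 3 + a)) : congMinusCount d a n ≤ 1 := by
  rw [congMinusCount, Finite.card_le_one_iff_subsingleton]
  set P := {p : n.Partition //
    (∀ x ∈ p.parts, x ≡ a [MOD d + 3] ∨ x + a ≡ 0 [MOD d + 3]) ∧
    ∀ x ∈ p.parts, x ≠ d + 3 - a}
  have key : ∀ p : P, p.1.parts.filter (· ≠ a) = 0 ∧ a ∣ n ∨
      n = d + 3 + a ∧ p.1.parts = {n} := by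
    intro p
    by_cases h : ∃ x ∈ p.1.parts, x ≠ a
    · right
      obtain ⟨x, hx, hxa⟩ := h
      obtain ⟨s, hs⟩ := Multiset.exists_cons_of_mem hx
      have hsum : x + s.sum = n := by rw [← p.1.parts_sum, hs, Multiset.sum_cons]
      obtain ⟨j, hj, h⟩ := two_mul_div_of_modEq ha had (p.2.1 x hx) hxa (p.2.2 x hx)
        (p.1.parts_pos hx)
      have hxa' : d + 3 + a ≤ x := by
        rcases h with ⟨h, -⟩ | ⟨h, -⟩ <;> nlinarith
      have hs0 : s = 0 := Multiset.eq_zero_of_forall_notMem fun y hy => by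
        have hy' : y ∈ p.1.parts := hs ▸ Multiset.mem_cons_of_mem hy
        have hyn := Multiset.single_le_sum (fun _ _ => Nat.zero_le _) y hy
        obtain ⟨i, hi, h'⟩ := two_mul_div_of_modEq ha had (p.2.1 y hy') (by omega)
          (p.2.2 y hy') (p.1.parts_pos hy')
        rcases h' with ⟨h', -⟩ | ⟨h', -⟩ <;> nlinarith
      subst hs0
      simp only [Multiset.sum_zero, add_zero] at hsum
      subst hsum
      refine ⟨?_, hs⟩
      have hj1 : j < 2 := by
        by_contra hj2
        rcases h with ⟨h, -⟩ | ⟨h, -⟩ <;> nlinarith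
      obtain rfl : j = 1 := by omega
      omega
    · push Not at h
      left
      refine ⟨Multiset.filter_eq_nil.2 fun x hx => not_not.2 (h x hx), ?_⟩
      rw [← p.1.parts_sum]
      exact Multiset.dvd_sum fun x hx => (h x hx) ▸ dvd_rfl
  refine ⟨fun p q => Subtype.ext ?_⟩
  have hcon : a ∣ n → n ≠ d + 3 + a := fun h1 h2 =>
    hex ⟨by rw [h2] at h1; exact (Nat.dvd_add_left dvd_rfl).1 h1, h2⟩
  rcases key p with ⟨h1, h2⟩ | ⟨h1, h2⟩ <;> rcases key q with ⟨h3, h4⟩ | ⟨h3, h4⟩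
  · exact Nat.Partition.ext_of_filter_ne ha (h1.trans h3.symm)
  · exact absurd h3 (hcon h2)
  · exact absurd h1 (hcon h4)
  · exact Nat.Partition.ext (h2.trans h4.symm)

end CongruenceParts

lemma cumPartCount_le_eightyOne_pow {k w : ℕ} (hw : w ≤ 2 * (k + 1) ^ 2) :
    cumPartCount w w ≤ 81 ^ (k + 1) := by
  have h := cumPartCount_le_exp k w w
  have hk : (0 : ℝ) < k + 1 := by positivity
  have h1 : ((k + 2 : ℝ) / (k + 1)) ^ w ≤ Real.exp (2 * (k + 1)) := by
    have h2 : (k + 2 : ℝ) / (k + 1) ≤ Real.exp (1 / (k + 1)) := by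
      refine le_trans (le_of_eq ?_) (Real.add_one_le_exp _)
      field_simp
      ring
    have hw' : (w : ℝ) ≤ 2 * (k + 1) ^ 2 := by exact_mod_cast hw
    calc ((k + 2 : ℝ) / (k + 1)) ^ w ≤ Real.exp (1 / (k + 1)) ^ w := by gcongr
      _ = Real.exp (w * (1 / (k + 1))) := (Real.exp_nat_mul _ _).symm
      _ ≤ _ := by
        rw [Real.exp_le_exp, mul_one_div, div_le_iff₀ hk]
        linarith
  have h2 : ((2 * k + 2).choose (k + 1) : ℝ) / (k + 2) ≤ 4 ^ (k + 1) := by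
    have h3 : ((2 * k + 2).choose (k + 1) : ℝ) ≤ 4 ^ (k + 1) := by
      have := Nat.choose_le_two_pow (2 * k + 2) (k + 1)
      rw [show 2 * k + 2 = 2 * (k + 1) by ring, pow_mul] at this
      exact_mod_cast this
    refine (div_le_self (by positivity) ?_).trans h3
    linarith
  have h4 : Real.exp 3 * 4 ≤ 81 := by
    have h5 : Real.exp 3 = Real.exp 1 ^ 3 := by rw [← Real.exp_nat_mul]; norm_num
    have h6 : Real.exp 1 ^ 3 ≤ 2.72 ^ 3 := by
      gcongr
      exact Real.exp_one_lt_d9.le.trans (by norm_num)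
    rw [h5]
    norm_num at h6 ⊢
    linarith
  have h7 : (cumPartCount w w : ℝ) ≤ 81 ^ (k + 1) :=
    calc (cumPartCount w w : ℝ)
        ≤ Real.exp (2 * (k + 1)) * 4 ^ (k + 1) * Real.exp (k + 1) := h.trans (by gcongr)
      _ = (Real.exp 3 * 4) ^ (k + 1) := by
        rw [mul_pow, ← Real.exp_nat_mul, mul_right_comm, ← Real.exp_add]
        push_cast
        ring_nf
      _ ≤ _ := by gcongr
  exact_mod_cast h7

lemma eightyOne_pow_mul_factorial_le {j : ℕ} (hj : 8 ≤ j) :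
    (j + 1).factorial * j.factorial * 81 ^ (j + 2) ≤ (62 * (j + 1) ^ 2) ^ j := by
  induction j, hj using Nat.le_induction with
  | base => decide +kernel
  | succ j hj ih =>
    have hb : 3 * (j + 1) ^ j ≤ 2 * (j + 2) ^ j := by
      have h1 : (j + 1) ^ j + j * (j + 1) ^ (j - 1) ≤ (j + 2) ^ j := by
        have key : ∀ i : ℕ, (j + 1) ^ (i + 1) + (i + 1) * (j + 1) ^ i ≤ (j + 2) ^ (i + 1) := by
          intro i
          induction i with
          | zero => simp
          | succ i hi =>
            rw [pow_succ (j + 2)]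
            refine le_trans ?_ (Nat.mul_le_mul_right _ hi)
            ring_nf
            linarith [Nat.zero_le (i * (1 + j) ^ i), Nat.zero_le ((1 + j) ^ i)]
        obtain ⟨i, rfl⟩ := Nat.exists_eq_add_of_le' (show 1 ≤ j by omega)
        exact key i
      obtain ⟨i, rfl⟩ := Nat.exists_eq_add_of_le' (show 1 ≤ j by omega)
      rw [Nat.add_sub_cancel] at h1
      have h2 : (i + 1 + 1) ^ (i + 1) ≤ 2 * ((i + 1) * (i + 1 + 1) ^ i) := by
        rw [pow_succ', ← mul_assoc]
        gcongr
        omega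
      omega
    have hb2 : 9 * ((j + 1) ^ 2) ^ j ≤ 4 * ((j + 2) ^ 2) ^ j := by
      have := Nat.mul_le_mul hb hb
      rw [pow_right_comm, pow_right_comm (j + 2)]
      nlinarith
    calc (j + 1 + 1).factorial * (j + 1).factorial * 81 ^ (j + 1 + 2)
        = 81 * (j + 2) * (j + 1) * ((j + 1).factorial * j.factorial * 81 ^ (j + 2)) := by
          rw [Nat.factorial_succ (j + 1), Nat.factorial_succ j]
          ring
      _ ≤ 81 * (j + 2) * (j + 1) * (62 * (j + 1) ^ 2) ^ j := by gcongr
      _ = 9 * (j + 2) * (j + 1) * 62 ^ j * (9 * ((j + 1) ^ 2) ^ j) := by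
          rw [mul_pow]
          ring
      _ ≤ 9 * (j + 2) * (j + 1) * 62 ^ j * (4 * ((j + 2) ^ 2) ^ j) := by gcongr
      _ ≤ 62 * (j + 2) * (j + 2) * 62 ^ j * ((j + 2) ^ 2) ^ j := by
          have : 4 * (9 * (j + 2) * (j + 1)) ≤ 62 * (j + 2) * (j + 2) := by nlinarith
          calc _ = 4 * (9 * (j + 2) * (j + 1)) * (62 ^ j * ((j + 2) ^ 2) ^ j) := by ring
            _ ≤ 62 * (j + 2) * (j + 2) * (62 ^ j * ((j + 2) ^ 2) ^ j) := by gcongr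
            _ = _ := by ring
      _ = (62 * (j + 1 + 1) ^ 2) ^ (j + 1) := by
          rw [mul_pow]
          ring

/-- A version of the exponential bound that can be checked by evaluating natural numbers. -/
lemma cumPartCount_le_of_numeric (r : ℕ) {j w W C : ℕ} (hw : w ≤ W)
    (h : (r + 2) ^ W * (2 * r + 2).choose (r + 1) * 27183 ^ (r + 1) ≤
      C * ((r + 1) ^ W * (r + 2) * 10000 ^ (r + 1))) : cumPartCount j w ≤ C := by
  have h1 := cumPartCount_le_exp r j w
  have hr : (0 : ℝ) < r + 1 := by positivity
  have h2 : ((r + 2 : ℝ) / (r + 1)) ^ w ≤ ((r + 2 : ℝ) / (r + 1)) ^ W := by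
    refine pow_le_pow_right₀ ?_ hw
    rw [one_le_div hr]
    linarith
  have h3 : Real.exp (r + 1) ≤ (27183 / 10000) ^ (r + 1) := by
    have : Real.exp (r + 1) = Real.exp 1 ^ (r + 1) := by
      rw [← Real.exp_nat_mul]
      push_cast
      ring_nf
    rw [this]
    gcongr
    exact Real.exp_one_lt_d9.le.trans (by norm_num)
  have h4 : (cumPartCount j w : ℝ) ≤ ((r + 2 : ℝ) / (r + 1)) ^ W *
      ((2 * r + 2).choose (r + 1) / (r + 2)) * (27183 / 10000) ^ (r + 1) :=
    h1.trans (by gcongr)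
  have h5 : ((r + 2 : ℝ) / (r + 1)) ^ W *
      ((2 * r + 2).choose (r + 1) / (r + 2)) * (27183 / 10000) ^ (r + 1) ≤ C := by
    rw [div_pow, div_pow, div_mul_div_comm, div_mul_div_comm, div_le_iff₀ (by positivity)]
    exact_mod_cast h
  exact_mod_cast h4.trans h5

lemma le_gapCount_of_mul_le {d a n k N C : ℕ} (ha : 0 < a)
    (h : (k + 1) * (2 * a + d * k) + 2 * N ≤ 2 * n)
    (hC : (k + 1).factorial * k.factorial * C ≤ N ^ k) : C ≤ gapCount d a n :=
  Nat.le_of_mul_le_mul_left (hC.trans (pow_le_mul_gapCount ha h))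
    (Nat.mul_pos (Nat.factorial_pos _) (Nat.factorial_pos _))

lemma cumPartCount_le_gapCount {d a n w : ℕ} (ha : 4 ≤ a) (had : 31 * a ≤ d + 3)
    (hw : w * (d + 3) ≤ 2 * n) (h3 : 3 ≤ w) : cumPartCount w w ≤ gapCount d a n := by
  have ha0 : 0 < a := by omega
  have hn : ∀ W, W ≤ w → W * (d + 3) ≤ 2 * n := fun W hW => (Nat.mul_le_mul_right _ hW).trans hw
  rcases Nat.lt_or_ge w 19 with h | h
  · have hC : cumPartCount w w + 66 ≤ 31 * w := by
      have : ∀ v ∈ Finset.Icc 3 18, cumPartCount v v + 66 ≤ 31 * v := by decide +kernel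
      exact this w (Finset.mem_Icc.2 (by omega))
    refine (show _ ≤ 31 * w - 66 by omega).trans
      (le_gapCount_of_mul_le (k := 1) (N := 62 * w - 132) ha0 ?_ ?_)
    · obtain ⟨v, rfl⟩ := Nat.exists_eq_add_of_le' h3
      have : v * 124 ≤ v * (d + 3) := Nat.mul_le_mul_left _ (by omega)
      rw [add_mul] at hw
      omega
    · simp
      omega
  rcases Nat.lt_or_ge w 29 with h | h
  · refine (cumPartCount_le_of_numeric 3 (W := 28) (C := 507000) (by omega)
      (by decide +kernel)).trans
      (le_gapCount_of_mul_le (k := 3) (N := 418) ha0 ?_ (by decide +kernel))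
    have := hn 19 (by omega)
    omega
  rcases Nat.lt_or_ge w 41 with h | h
  · refine (cumPartCount_le_of_numeric 3 (W := 40) (C := 7700000) (by omega)
      (by decide +kernel)).trans
      (le_gapCount_of_mul_le (k := 3) (N := 1038) ha0 ?_ (by decide +kernel))
    have := hn 29 (by omega)
    omega
  rcases Nat.lt_or_ge w 65 with h | h
  · refine (cumPartCount_le_of_numeric 5 (W := 64) (C := 1400000000) (by omega)
      (by decide +kernel)).trans
      (le_gapCount_of_mul_le (k := 5) (N := 658) ha0 ?_ (by decide +kernel))
    have := hn 41 (by omega)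
    omega
  rcases Nat.lt_or_ge w 101 with h | h
  · refine (cumPartCount_le_of_numeric 5 (W := 100) (C := 500000000000) (by omega)
      (by decide +kernel)).trans
      (le_gapCount_of_mul_le (k := 5) (N := 2146) ha0 ?_ (by decide +kernel))
    have := hn 65 (by omega)
    omega
  rcases Nat.lt_or_ge w 151 with h | h
  · refine (cumPartCount_le_of_numeric 7 (W := 150) (C := 600000000000000) (by omega)
      (by decide +kernel)).trans
      (le_gapCount_of_mul_le (k := 6) (N := 3630) ha0 ?_ (by decide +kernel))
    have := hn 101 (by omega)
    omega
  rcases Nat.lt_or_ge w 162 with h | h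
  · refine (cumPartCount_le_of_numeric 7 (W := 161) (C := 1000000000000000) (by omega)
      (by decide +kernel)).trans
      (le_gapCount_of_mul_le (k := 7) (N := 5858) ha0 ?_ (by decide +kernel))
    have := hn 151 (by omega)
    omega
  obtain ⟨j, hj, hj1, hj2⟩ : ∃ j, 8 ≤ j ∧ 2 * (j + 1) ^ 2 ≤ w ∧ w ≤ 2 * (j + 2) ^ 2 := by
    have h1 := Nat.sqrt_le' (w / 2)
    have h2 := Nat.lt_succ_sqrt' (w / 2)
    have h4 : 9 ≤ Nat.sqrt (w / 2) := Nat.le_sqrt.2 (by omega)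
    obtain ⟨j, hj⟩ := Nat.exists_eq_add_of_le' (show 1 ≤ Nat.sqrt (w / 2) by omega)
    rw [hj] at h1 h2 h4
    have h5 : w / 2 < (j + 2) ^ 2 := h2
    exact ⟨j, by omega, by omega, by omega⟩
  refine (cumPartCount_le_eightyOne_pow (k := j + 1) hj2).trans
    (le_gapCount_of_mul_le ha0 ?_ (eightyOne_pow_mul_factorial_le hj))
  have h1 := hn _ hj1
  have h5 : (j + 1) * (31 * a) ≤ (j + 1) * (d + 3) := Nat.mul_le_mul_left _ had
  have h6 : (j + 1) ^ 2 * 124 ≤ (j + 1) ^ 2 * (d + 3) := Nat.mul_le_mul_left _ (by omega)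
  have h7 : (j + 1) * (d * j) ≤ (j + 1) * ((d + 3) * j) := by gcongr; omega
  nlinarith

lemma mul_cdiv_le_add_negRes {a d : ℕ} (ha : 0 < a) : a * cdiv d a ≤ d + negRes d a := by
  have hdm := Nat.div_add_mod d a
  have hlt := Nat.mod_lt d ha
  rcases Nat.eq_zero_or_pos (d % a) with h | h
  · have : cdiv d a = d / a := by
      rw [cdiv, Nat.div_eq_of_lt_le]
      · rw [mul_comm]
        omega
      · rw [add_mul, mul_comm (d / a)]
        omega
    rw [this]
    omega
  · have h1 : cdiv d a = d / a + 1 := by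
      rw [cdiv, Nat.div_eq_of_lt_le]
      · rw [add_mul, mul_comm (d / a)]
        omega
      · rw [add_mul, add_mul, mul_comm (d / a)]
        omega
    have h2 : negRes d a = a - d % a := Nat.mod_eq_of_lt (by omega)
    rw [h1, h2, mul_add]
    omega

lemma congMinusCount_le_gapCount {a d n : ℕ} (ha : 4 ≤ a) (had : 31 * a ≤ d + 3) (hn : 1 ≤ n)
    (hex : ¬ (a ∣ d + 3 ∧ n = d + 3 + a)) : congMinusCount d a n ≤ gapCount d a n := by
  have ha0 : 0 < a := by omega
  rcases Nat.lt_or_ge n a with hna | hna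
  · rw [congMinusCount_eq_zero ha0 had hn hna]
    exact Nat.zero_le _
  rcases Nat.lt_or_ge n (2 * a + d) with hnd | hnd
  · refine (congMinusCount_le_one ha0 had hnd hex).trans ?_
    exact card_le_gapCount ha0 {[n]} (by simpa using hna)
  refine (congMinusCount_le_cumPartCount ha0 had).trans ?_
  have hw : 2 * n / (d + 3) * (d + 3) ≤ 2 * n := Nat.div_mul_le_self _ _
  generalize 2 * n / (d + 3) = w at hw
  rcases Nat.lt_or_ge w 3 with h | h
  · have h2 : cumPartCount w w ≤ 2 := by
      interval_cases w <;> decide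
    refine h2.trans ?_
    have hne : [n] ≠ [a, n - a] := by simp
    rw [← Finset.card_pair hne]
    refine card_le_gapCount ha0 _ fun l hl => ?_
    rcases Finset.mem_insert.1 hl with rfl | hl
    · simpa using hna
    · rw [Finset.mem_singleton.1 hl]
      simp
      omega
  · exact cumPartCount_le_gapCount ha had hw h

theorem stmt1 (a d : ℕ) (ha : 4 ≤ a) (hd : 1 ≤ d)
    (hceil : cdiv d a = 31 ∨ 63 ≤ cdiv d a) (hres : negRes d a ≤ 3) :
    (¬ a ∣ d + 3 → ∀ n, 1 ≤ n → congMinusCount d a n ≤ gapCount d a n) ∧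
    (a ∣ d + 3 → ∀ n, 1 ≤ n → n ≠ d + 3 + a →
      congMinusCount d a n ≤ gapCount d a n) := by
  have had : 31 * a ≤ d + 3 := by
    have h1 := mul_cdiv_le_add_negRes (d := d) (show 0 < a by omega)
    have h2 : a * 31 ≤ a * cdiv d a := Nat.mul_le_mul_left _ (by omega)
    omega
  exact ⟨fun h n hn => congMinusCount_le_gapCount ha had hn fun hc => h hc.1,
    fun _ n hn hne => congMinusCount_le_gapCount ha had hn fun hc => hne hc.2⟩
end

section
/- For all integers d with 121 ≤ d ≤ 124 or d ≥ 249, and all integers n ≥ 1 such that n ≠ d + 7 whenever d ≡ 1 (mod 4), one has q_d^{(4)}(n) ≥ Q_d^{(4,-)}(n). -/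
/-- Ascending lists with `k + 1` entries and sum `n`: each of the first `k` entries exceeds its
least admissible value (`s` for the first one, the previous entry plus `d` for the others)
by at most `B`, and the last entry is what remains. -/
def gapLists (d B : ℕ) : ℕ → ℕ → ℕ → Finset (List ℕ)
  | 0, _, n => {[n]}
  | k + 1, s, n => (Finset.range (B + 1)).biUnion fun g =>
      (gapLists d B k (s + g + d) (n - (s + g))).image (List.cons (s + g))

theorem card_gapLists (d B k s n : ℕ) : (gapLists d B k s n).card = (B + 1) ^ k := by
  induction k generalizing s n with
  | zero => simp [gapLists]
  | succ k ih =>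
    rw [gapLists, Finset.card_biUnion]
    · simp only [Finset.card_image_of_injective _ (List.cons_injective), ih]
      simp [pow_succ, mul_comm]
    · intro g _ g' _ hgg'
      simp only [Function.onFun, Finset.disjoint_left, Finset.mem_image]
      rintro _ ⟨l, _, rfl⟩ ⟨l', _, h⟩
      have := (List.cons.inj h).1
      omega

/-- Twice the least sum for which all `gapLists` are legitimate is
`2 * (k + 1) * s + B * (k * k + 3 * k) + d * (k * k + k)`. -/
theorem gapLists_spec {d B k s n : ℕ}
    (h : 2 * (k + 1) * s + B * (k * k + 3 * k) + d * (k * k + k) ≤ 2 * n)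
    {l : List ℕ} (hl : l ∈ gapLists d B k s n) :
    l.sum = n ∧ (∀ x ∈ l, s ≤ x) ∧ l.IsChain (fun x y => x + d ≤ y) := by
  induction k generalizing s n l with
  | zero =>
    obtain rfl : l = [n] := by simpa [gapLists] using hl
    refine ⟨by simp, ?_, by simp⟩
    intro x hx
    obtain rfl : x = n := by simpa using hx
    omega
  | succ k ih =>
    simp only [gapLists, Finset.mem_biUnion, Finset.mem_range, Finset.mem_image] at hl
    obtain ⟨g, hg, l, hl, rfl⟩ := hl
    have hsn : s + g ≤ n := by
      nlinarith [Nat.zero_le (B * (k * k + 3 * k)), Nat.zero_le (d * (k * k + k)),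
        Nat.zero_le (k * s), Nat.zero_le (k * d), Nat.zero_le (k * B)]
    obtain ⟨m, rfl⟩ := Nat.exists_eq_add_of_le hsn
    rw [Nat.add_sub_cancel_left] at hl
    obtain ⟨hsum, hmin, hchain⟩ := ih (by nlinarith) hl
    refine ⟨by simp [hsum], ?_, ?_⟩
    · intro x hx
      rcases List.mem_cons.1 hx with rfl | hx
      · omega
      · have := hmin x hx
        omega
    · exact hchain.cons fun y hy => hmin y (List.mem_of_mem_head? hy)

theorem sort_coe_of_isChain_gap {d : ℕ} {l : List ℕ} (h : l.IsChain (fun x y => x + d ≤ y)) :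
    (l : Multiset ℕ).sort (· ≤ ·) = l := by
  have hle : l.IsChain (· ≤ ·) := h.imp fun x y hxy => (Nat.le_add_right x d).trans hxy
  rw [Multiset.coe_sort]
  exact List.mergeSort_eq_self _ (by simpa using hle.pairwise)

theorem pow_le_gapCount {d a B k n : ℕ} (ha : 0 < a)
    (h : 2 * (k + 1) * a + B * (k * k + 3 * k) + d * (k * k + k) ≤ 2 * n) :
    (B + 1) ^ k ≤ gapCount d a n := by
  rw [← card_gapLists d B k a n, gapCount, ← Nat.card_eq_finsetCard]
  have hspec := fun l : gapLists d B k a n => gapLists_spec h l.2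
  refine Nat.card_le_card_of_injective
    (fun l => ⟨⟨(l.1 : Multiset ℕ), fun {x} hx => ha.trans_le ((hspec l).2.1 x (by simpa using hx)),
        by simpa using (hspec l).1⟩,
      fun x hx => (hspec l).2.1 x (by simpa using hx),
      by rw [sort_coe_of_isChain_gap (hspec l).2.2]; exact (hspec l).2.2⟩) ?_
  intro l l' hll'
  have hparts : (l.1 : Multiset ℕ) = l'.1 := congrArg (fun p => p.1.parts) hll'
  refine Subtype.ext ?_
  rw [← sort_coe_of_isChain_gap (hspec l).2.2, hparts, sort_coe_of_isChain_gap (hspec l').2.2]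

/-- The number of ways to choose multiplicities for the entries of a list of positive weights so
that the total weight is at most `X`. -/
def weightCount : List ℕ → ℕ → ℕ
  | [], _ => 1
  | w :: l, X => weightCount l X +
      if 0 < w ∧ w ≤ X then weightCount (w :: l) (X - w) else 0
termination_by l X => (l.length, X)
decreasing_by
  · exact Prod.Lex.left _ _ (by simp)
  · exact Prod.Lex.right _ (by omega)

theorem weightCount_nil (X : ℕ) : weightCount [] X = 1 := by
  rw [weightCount]

theorem weightCount_cons {w : ℕ} (hw : 0 < w) (l : List ℕ) (X : ℕ) :
    weightCount (w :: l) X =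
      weightCount l X + if w ≤ X then weightCount (w :: l) (X - w) else 0 := by
  rw [weightCount]
  simp [hw]

theorem encard_multiset_le_weightCount (w : ℕ → ℕ) (L : List ℕ) (hL : ∀ s ∈ L, 0 < w s) (X : ℕ) :
    {m : Multiset ℕ | (∀ x ∈ m, x ∈ L) ∧ (m.map w).sum ≤ X}.encard ≤
      weightCount (L.map w) X := by
  induction L generalizing X with
  | nil =>
    simp only [List.map_nil, weightCount_nil, Nat.cast_one, Set.encard_le_one_iff]
    rintro m m' ⟨hm, _⟩ ⟨hm', _⟩
    rw [Multiset.eq_zero_of_forall_notMem fun x hx => List.not_mem_nil (hm x hx),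
      Multiset.eq_zero_of_forall_notMem fun x hx => List.not_mem_nil (hm' x hx)]
  | cons s L ih =>
    have hs : 0 < w s := hL s (by simp)
    have hL' : ∀ x ∈ L, 0 < w x := fun x hx => hL x (by simp [hx])
    induction X using Nat.strong_induction_on with
    | _ X ihX =>
      rw [List.map_cons, weightCount_cons hs]
      have key : {m : Multiset ℕ | (∀ x ∈ m, x ∈ s :: L) ∧ (m.map w).sum ≤ X} ⊆
          {m : Multiset ℕ | (∀ x ∈ m, x ∈ L) ∧ (m.map w).sum ≤ X} ∪
          (if w s ≤ X then Multiset.cons s ''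
            {m : Multiset ℕ | (∀ x ∈ m, x ∈ s :: L) ∧ (m.map w).sum ≤ X - w s} else ∅) := by
        rintro m ⟨hm, hsum⟩
        by_cases hsm : s ∈ m
        · right
          obtain ⟨m, rfl⟩ := Multiset.exists_cons_of_mem hsm
          rw [Multiset.map_cons, Multiset.sum_cons] at hsum
          rw [if_pos (by omega)]
          exact ⟨m, ⟨fun x hx => hm x (Multiset.mem_cons_of_mem hx), by omega⟩, rfl⟩
        · left
          refine ⟨fun x hx => ?_, hsum⟩
          rcases List.mem_cons.1 (hm x hx) with rfl | h
          · exact absurd hx hsm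
          · exact h
      refine (Set.encard_le_encard key).trans ((Set.encard_union_le _ _).trans ?_)
      push_cast
      refine add_le_add (ih hL' X) ?_
      split_ifs with hX
      · exact (Set.encard_image_le _ _).trans (by simpa using ihX (X - w s) (by omega))
      · simp

/-- One step of the tabulation of `weightCount`: the table is produced in reverse order. -/
def addWeight (w : ℕ) (row : List ℕ) : List ℕ :=
  (row.foldl (fun acc a => (a + acc.getD (w - 1) 0) :: acc) []).reverse

theorem addWeight_map_weightCount {w : ℕ} (hw : 0 < w) (l : List ℕ) (X : ℕ) :
    addWeight w ((List.range X).map (weightCount l)) =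
      (List.range X).map (weightCount (w :: l)) := by
  rw [addWeight, List.reverse_eq_iff]
  induction X with
  | zero => simp
  | succ X ih =>
    rw [List.range_succ, List.map_append, List.foldl_append, ih, List.map_append,
      List.reverse_append]
    simp only [List.map_cons, List.map_nil, List.foldl_cons, List.foldl_nil, List.reverse_cons,
      List.reverse_nil, List.nil_append, List.cons_append, List.cons.injEq, and_true]
    rw [weightCount_cons hw, List.getD_eq_getElem?_getD]
    congr 1
    split_ifs with hX
    · rw [List.getElem?_eq_getElem (by simp; omega)]
      simp only [List.getElem_reverse, List.getElem_map, List.getElem_range, List.length_map,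
        List.length_range, Option.getD_some]
      congr 1
      omega
    · rw [List.getElem?_eq_none (by simp; omega)]
      rfl

theorem foldr_addWeight {l : List ℕ} (hl : ∀ w ∈ l, 0 < w) (X : ℕ) :
    l.foldr addWeight (List.replicate X 1) = (List.range X).map (weightCount l) := by
  induction l with
  | nil =>
    refine (List.eq_replicate_iff.2 ⟨by simp, ?_⟩).symm
    simp [weightCount_nil]
  | cons w l ih =>
    rw [List.foldr_cons, ih fun x hx => hl x (by simp [hx]),
      addWeight_map_weightCount (hl w (by simp))]

theorem weightCount_eq_getD {l : List ℕ} (hl : ∀ w ∈ l, 0 < w) (X : ℕ) :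
    weightCount l X = (l.foldr addWeight (List.replicate (X + 1) 1)).getD X 0 := by
  rw [foldr_addWeight hl]
  simp

/-- The weights `1, 2, 2, 3, 3, …, J + 1, J + 1`. -/
def doubledWeights (J : ℕ) : List ℕ :=
  1 :: (List.range J).flatMap fun j => [j + 2, j + 2]

theorem doubledWeights_pos {J w : ℕ} (hw : w ∈ doubledWeights J) : 0 < w := by
  simp only [doubledWeights, List.mem_cons, List.mem_flatMap] at hw
  rcases hw with rfl | ⟨j, _, hj⟩
  · simp
  · simp at hj
    omega

theorem weightCount_doubledWeights_le_of_lt_eight {m : ℕ} (h2 : 2 ≤ m) (h8 : m < 8) :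
    weightCount (doubledWeights ((m + 1) ^ 2 - 2)) ((m + 1) ^ 2 - 2) ≤ 121 ^ (m - 1) := by
  rw [weightCount_eq_getD fun w hw => doubledWeights_pos hw]
  interval_cases m <;> decide +kernel

theorem weightCount_mul_pow_le {l : List ℕ} (hl : ∀ w ∈ l, 0 < w) {t : ℝ} (ht0 : 0 < t)
    (ht1 : t < 1) (X : ℕ) :
    weightCount l X * t ^ X ≤ (l.map fun w => (1 - t ^ w)⁻¹).prod := by
  induction l generalizing X with
  | nil =>
    simpa [weightCount_nil] using pow_le_one₀ ht0.le ht1.le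
  | cons w l ih =>
    have hw : 0 < w := hl w (by simp)
    have hl' : ∀ x ∈ l, 0 < x := fun x hx => hl x (by simp [hx])
    have htw : 0 < 1 - t ^ w := sub_pos.2 (pow_lt_one₀ ht0.le ht1 hw.ne')
    rw [List.map_cons, List.prod_cons]
    set P := (l.map fun w => (1 - t ^ w)⁻¹).prod
    have hP : 0 ≤ P := le_trans (by positivity) (ih hl' 0)
    have hstep : (1 - t ^ w)⁻¹ * P = P + t ^ w * ((1 - t ^ w)⁻¹ * P) := by
      field_simp
      ring
    induction X using Nat.strong_induction_on with
    | _ X ihX =>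
      rw [weightCount_cons hw]
      split_ifs with hX
      · have hpow : t ^ X = t ^ w * t ^ (X - w) := by rw [← pow_add]; congr 1; omega
        rw [hstep]
        push_cast
        rw [add_mul]
        refine add_le_add (ih hl' X) ?_
        rw [hpow, mul_left_comm]
        exact mul_le_mul_of_nonneg_left (ihX (X - w) (by omega)) (by positivity)
      · rw [hstep, add_zero]
        exact (ih hl' X).trans (le_add_of_nonneg_right (by positivity))

theorem prod_inv_one_sub_pow_le_exp {t : ℝ} (ht0 : 0 < t) (ht1 : t < 1) (J : ℕ) :
    ∏ j ∈ Finset.range J, (1 - t ^ (j + 1))⁻¹ ≤ Real.exp (Real.pi ^ 2 / 6 * (t / (1 - t))) := by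
  have hpow : ∀ j : ℕ, t ^ (j + 1) < 1 := fun j => pow_lt_one₀ ht0.le ht1 j.succ_ne_zero
  have hexp : ∀ j : ℕ, (1 - t ^ (j + 1))⁻¹ = Real.exp (-Real.log (1 - t ^ (j + 1))) := fun j => by
    rw [Real.exp_neg, Real.exp_log (sub_pos.2 (hpow j))]
  simp only [hexp]
  rw [← Real.exp_sum, Real.exp_le_exp]
  have hsum : HasSum (fun k : ℕ => ∑ j ∈ Finset.range J, (t ^ (j + 1)) ^ (k + 1) / ((k : ℝ) + 1))
      (∑ j ∈ Finset.range J, -Real.log (1 - t ^ (j + 1))) :=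
    hasSum_sum fun j _ => Real.hasSum_pow_div_log_of_abs_lt_one
      (by rw [abs_of_pos (by positivity)]; exact hpow j)
  have hzeta : HasSum (fun k : ℕ => 1 / ((k : ℝ) + 1) ^ 2 * (t / (1 - t)))
      (Real.pi ^ 2 / 6 * (t / (1 - t))) := by
    refine HasSum.mul_right _ ?_
    have := (hasSum_nat_add_iff' 1).2 hasSum_zeta_two
    simpa using this
  refine hasSum_le (fun k => ?_) hsum hzeta
  have hu0 : 0 < t ^ (k + 1) := by positivity
  have hu1 : 0 < 1 - t ^ (k + 1) := sub_pos.2 (hpow k)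
  have ht : 0 < 1 - t := sub_pos.2 ht1
  have hk : (0 : ℝ) < (k : ℝ) + 1 := by positivity
  have hgeom : ∑ j ∈ Finset.range J, (t ^ (j + 1)) ^ (k + 1) ≤ t ^ (k + 1) / (1 - t ^ (k + 1)) := by
    have hterm : ∀ j : ℕ, (t ^ (j + 1)) ^ (k + 1) = t ^ (k + 1) * (t ^ (k + 1)) ^ j := fun j => by
      ring
    simp only [hterm]
    rw [← Finset.mul_sum, div_eq_mul_inv]
    refine mul_le_mul_of_nonneg_left ?_ hu0.le
    rw [geom_sum_eq (hpow k).ne, ← neg_div_neg_eq, neg_sub, neg_sub, div_eq_mul_inv]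
    exact mul_le_of_le_one_left (inv_nonneg.2 hu1.le) (sub_le_self _ (by positivity))
  have hfactor : (k + 1) * t ^ k * (1 - t) ≤ 1 - t ^ (k + 1) := by
    rw [← geom_sum_mul_neg]
    refine mul_le_mul_of_nonneg_right ?_ ht.le
    have hle : ∀ i ∈ Finset.range (k + 1), t ^ k ≤ t ^ i := fun i hi =>
      pow_le_pow_of_le_one ht0.le ht1.le (by simpa [Nat.lt_succ_iff] using hi)
    simpa using Finset.card_nsmul_le_sum _ _ _ hle
  rw [← Finset.sum_div]
  calc (∑ j ∈ Finset.range J, (t ^ (j + 1)) ^ (k + 1)) / ((k : ℝ) + 1)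
      ≤ t ^ (k + 1) / (1 - t ^ (k + 1)) / ((k : ℝ) + 1) := by gcongr
    _ ≤ 1 / ((k : ℝ) + 1) ^ 2 * (t / (1 - t)) := by
      rw [div_div, div_mul_div_comm, div_le_div_iff₀ (by positivity) (by positivity)]
      have := mul_le_mul_of_nonneg_left hfactor (by positivity : 0 ≤ t * ((k : ℝ) + 1))
      rw [pow_succ] at this ⊢
      nlinarith

theorem prod_doubledWeights_le_exp {t : ℝ} (ht0 : 0 < t) (ht1 : t < 1) (J : ℕ) :
    ((doubledWeights J).map fun w => (1 - t ^ w)⁻¹).prod ≤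
      Real.exp (Real.pi ^ 2 / 3 * (t / (1 - t))) := by
  have hinv : 1 ≤ (1 - t)⁻¹ := (one_le_inv₀ (by linarith)).2 (by linarith)
  have hprod : ∀ K : ℕ, (((List.range K).flatMap fun j => [j + 2, j + 2]).map
      fun w => (1 - t ^ w)⁻¹).prod = (∏ j ∈ Finset.range K, (1 - t ^ (j + 2))⁻¹) ^ 2 := by
    intro K
    induction K with
    | zero => simp
    | succ K ih =>
      rw [List.range_succ, List.flatMap_append, List.map_append, List.prod_append, ih,
        Finset.prod_range_succ]
      simp
      ring
  calc ((doubledWeights J).map fun w => (1 - t ^ w)⁻¹).prod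
      = (1 - t)⁻¹ * (∏ j ∈ Finset.range J, (1 - t ^ (j + 2))⁻¹) ^ 2 := by
        rw [doubledWeights, List.map_cons, List.prod_cons, hprod, pow_one]
    _ ≤ (1 - t)⁻¹ ^ 2 * (∏ j ∈ Finset.range J, (1 - t ^ (j + 2))⁻¹) ^ 2 := by
        gcongr
        exact le_self_pow₀ hinv two_ne_zero
    _ = (∏ j ∈ Finset.range (J + 1), (1 - t ^ (j + 1))⁻¹) ^ 2 := by
        rw [Finset.prod_range_succ', ← mul_pow, mul_comm]
        simp
    _ ≤ Real.exp (Real.pi ^ 2 / 6 * (t / (1 - t))) ^ 2 := by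
        refine pow_le_pow_left₀ (Finset.prod_nonneg fun j _ => ?_)
          (prod_inv_one_sub_pow_le_exp ht0 ht1 _) 2
        exact inv_nonneg.2 (sub_nonneg.2 (pow_le_one₀ ht0.le ht1.le))
    _ = Real.exp (Real.pi ^ 2 / 3 * (t / (1 - t))) := by
        rw [← Real.exp_nat_mul]
        congr 1
        push_cast
        ring

theorem weightCount_doubledWeights_le_exp (J X : ℕ) {s : ℝ} (hs : 0 < s) :
    (weightCount (doubledWeights J) X : ℝ) ≤ Real.exp (Real.pi ^ 2 / 3 * s + X / s) := by
  have ht0 : 0 < s / (s + 1) := by positivity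
  have ht1 : s / (s + 1) < 1 := (div_lt_one (by positivity)).2 (by linarith)
  have hratio : s / (s + 1) / (1 - s / (s + 1)) = s := by
    field_simp
    ring
  have hprod := (weightCount_mul_pow_le (fun w hw => doubledWeights_pos hw) ht0 ht1 X).trans
    (prod_doubledWeights_le_exp ht0 ht1 J)
  rw [hratio, ← le_div_iff₀ (by positivity)] at hprod
  refine hprod.trans ?_
  rw [Real.exp_add, div_eq_mul_inv]
  refine mul_le_mul_of_nonneg_left ?_ (Real.exp_pos _).le
  rw [← inv_pow, inv_div, div_eq_mul_inv (X : ℝ), Real.exp_nat_mul]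
  refine pow_le_pow_left₀ (by positivity) ?_ X
  calc (s + 1) / s = s⁻¹ + 1 := by
        field_simp
        ring
    _ ≤ Real.exp s⁻¹ := Real.add_one_le_exp _

theorem exp_le_forty : Real.exp (73 / 20) ≤ 40 := by
  refine le_of_pow_le_pow_left₀ (n := 20) (by norm_num) (by norm_num) ?_
  rw [← Real.exp_nat_mul]
  calc Real.exp ((20 : ℕ) * (73 / 20)) = Real.exp 1 ^ 73 := by
        rw [← Real.exp_nat_mul]
        norm_num
    _ ≤ 2.7182818286 ^ 73 := by
        gcongr
        exact Real.exp_one_lt_d9.le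
    _ ≤ 40 ^ 20 := by norm_num

theorem forty_pow_le {m : ℕ} (hm : 8 ≤ m) : 40 ^ (m + 1) ≤ 121 ^ (m - 1) := by
  induction m, hm using Nat.le_induction with
  | base => norm_num
  | succ m hm ih =>
    obtain ⟨k, rfl⟩ := Nat.exists_eq_add_of_le hm
    rw [show 8 + k + 1 - 1 = 8 + k - 1 + 1 by omega, pow_succ, pow_succ 121]
    exact Nat.mul_le_mul ih (by norm_num)

theorem weightCount_doubledWeights_le {m : ℕ} (hm : 2 ≤ m) :
    weightCount (doubledWeights ((m + 1) ^ 2 - 2)) ((m + 1) ^ 2 - 2) ≤ 121 ^ (m - 1) := by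
  rcases lt_or_ge m 8 with h8 | h8
  · exact weightCount_doubledWeights_le_of_lt_eight hm h8
  refine le_trans ?_ (forty_pow_le h8)
  have hs : (0 : ℝ) < ((m : ℝ) + 1) / 2 := by positivity
  have hX : (((m + 1) ^ 2 - 2 : ℕ) : ℝ) ≤ ((m : ℝ) + 1) ^ 2 := by
    exact_mod_cast Nat.sub_le _ _
  have hpi : Real.pi ^ 2 ≤ 9.9 := by
    have := Real.pi_lt_d4
    nlinarith [Real.pi_pos]
  have hexponent : Real.pi ^ 2 / 3 * (((m : ℝ) + 1) / 2) +
      (((m + 1) ^ 2 - 2 : ℕ) : ℝ) / (((m : ℝ) + 1) / 2) ≤ (m + 1 : ℕ) * (73 / 20) := by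
    have h1 : (((m + 1) ^ 2 - 2 : ℕ) : ℝ) / (((m : ℝ) + 1) / 2) ≤ 2 * ((m : ℝ) + 1) := by
      rw [div_le_iff₀ hs]
      nlinarith
    push_cast
    nlinarith
  have := (weightCount_doubledWeights_le_exp ((m + 1) ^ 2 - 2) ((m + 1) ^ 2 - 2) hs).trans
    (Real.exp_le_exp.2 hexponent)
  rw [Real.exp_nat_mul] at this
  exact_mod_cast this.trans (pow_le_pow_left₀ (Real.exp_pos _).le exp_le_forty _)

/-- The parts `d + 7, 2 (d + 3) - 4, 2 (d + 3) + 4, …, (J + 1) (d + 3) - 4, (J + 1) (d + 3) + 4`. -/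
def congParts (d J : ℕ) : List ℕ :=
  (d + 7) :: (List.range J).flatMap fun j => [(j + 2) * (d + 3) - 4, (j + 2) * (d + 3) + 4]

theorem mem_congParts {d J x : ℕ} : x ∈ congParts d J ↔
    x = d + 7 ∨ ∃ j < J, x = (j + 2) * (d + 3) - 4 ∨ x = (j + 2) * (d + 3) + 4 := by
  simp [congParts]

theorem map_congParts {d : ℕ} (hd : 6 ≤ d) (J : ℕ) :
    (congParts d J).map (fun x => (x + 4) / (d + 3)) = doubledWeights J := by
  have hlow : ∀ j : ℕ, ((j + 2) * (d + 3) - 4 + 4) / (d + 3) = j + 2 := fun j => by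
    rw [Nat.sub_add_cancel (by nlinarith), Nat.mul_div_cancel _ (by omega)]
  have hhigh : ∀ j : ℕ, (j * (d + 3) + 4 + 4) / (d + 3) = j := fun j =>
    Nat.div_eq_of_lt_le (by omega) (by rw [Nat.add_mul]; omega)
  have hfirst := hhigh 1
  rw [show 1 * (d + 3) + 4 + 4 = d + 7 + 4 by ring] at hfirst
  simp [congParts, doubledWeights, List.map_flatMap, hlow, hhigh, hfirst]

theorem eq_or_of_cong {d x : ℕ} (hd : 6 ≤ d) (h0 : 0 < x)
    (h : x ≡ 4 [MOD d + 3] ∨ x + 4 ≡ 0 [MOD d + 3]) (hx : x ≠ d + 3 - 4) :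
    x = 4 ∨ x = d + 7 ∨ ∃ j, x = (j + 2) * (d + 3) - 4 ∨ x = (j + 2) * (d + 3) + 4 := by
  rcases h with h | h
  · rw [Nat.ModEq, Nat.mod_eq_of_lt (by omega : 4 < d + 3)] at h
    have hdiv := Nat.div_add_mod x (d + 3)
    rw [h, mul_comm] at hdiv
    rcases hq : x / (d + 3) with _ | _ | j
    · left
      rw [hq] at hdiv
      omega
    · right; left
      rw [hq] at hdiv
      omega
    · right; right
      rw [hq] at hdiv
      exact ⟨j, Or.inr hdiv.symm⟩
  · obtain ⟨q, hq⟩ := (Nat.modEq_zero_iff_dvd).1 h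
    rw [mul_comm] at hq
    rcases q with _ | _ | j
    · omega
    · omega
    · right; right
      exact ⟨j, Or.inl (by rw [show j + 2 = j + 1 + 1 by ring]; omega)⟩

theorem mul_weight_le {d x : ℕ} (hd : 6 ≤ d)
    (hx : x = d + 7 ∨ ∃ j, x = (j + 2) * (d + 3) - 4 ∨ x = (j + 2) * (d + 3) + 4) :
    (x + 4) / (d + 3) * (d + 1) ≤ x := by
  set q := (x + 4) / (d + 3) with hq
  have hle : q * (d + 3) ≤ x + 4 := Nat.div_mul_le_self _ _
  rcases lt_or_ge q 2 with h2 | h2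
  · have : d + 1 ≤ x := by
      rcases hx with hx | ⟨j, hx | hx⟩
      · omega
      · have : 2 * (d + 3) ≤ (j + 2) * (d + 3) := Nat.mul_le_mul_right _ (by omega)
        omega
      · have : 2 * (d + 3) ≤ (j + 2) * (d + 3) := Nat.mul_le_mul_right _ (by omega)
        omega
    nlinarith
  · nlinarith

/-- A partition into parts congruent to `±4` is determined by its parts different from `4`. -/
theorem congMinusCount_le_weightCount {d n Y : ℕ} (hd : 6 ≤ d) (hY : n / (d + 1) ≤ Y) :
    congMinusCount d 4 n ≤ weightCount (doubledWeights Y) Y := by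
  set w : ℕ → ℕ := fun x => (x + 4) / (d + 3) with hw
  set M := {m : Multiset ℕ | (∀ x ∈ m, x ∈ congParts d Y) ∧ (m.map w).sum ≤ Y}
  have hM : M.encard ≤ weightCount (doubledWeights Y) Y := by
    rw [← map_congParts hd]
    refine encard_multiset_le_weightCount w _ (fun s hs => ?_) Y
    exact doubledWeights_pos (J := Y) (by rw [← map_congParts hd]; exact List.mem_map_of_mem hs)
  have hfin : M.Finite := Set.finite_of_encard_le_coe hM
  have : Finite M := hfin
  have hmem : ∀ p : {p : n.Partition //
      (∀ x ∈ p.parts, x ≡ 4 [MOD d + 3] ∨ x + 4 ≡ 0 [MOD d + 3]) ∧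
      ∀ x ∈ p.parts, x ≠ d + 3 - 4}, p.1.parts.filter (· ≠ 4) ∈ M := by
    rintro ⟨p, hcong, hne⟩
    have hform : ∀ x ∈ p.parts.filter (· ≠ 4),
        x = d + 7 ∨ ∃ j, x = (j + 2) * (d + 3) - 4 ∨ x = (j + 2) * (d + 3) + 4 := by
      intro x hx
      rw [Multiset.mem_filter] at hx
      exact (eq_or_of_cong hd (p.parts_pos hx.1) (hcong x hx.1) (hne x hx.1)).resolve_left hx.2
    have hsum : ((p.parts.filter (· ≠ 4)).map w).sum ≤ Y := by
      refine le_trans ((Nat.le_div_iff_mul_le (by omega)).2 ?_) hY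
      rw [← Multiset.sum_map_mul_right]
      calc ((p.parts.filter (· ≠ 4)).map fun x => w x * (d + 1)).sum
          ≤ ((p.parts.filter (· ≠ 4)).map fun x => x).sum :=
            Multiset.sum_map_le_sum_map _ _ fun x hx => mul_weight_le hd (hform x hx)
        _ ≤ n := by
            have hsplit := congrArg Multiset.sum (Multiset.filter_add_not (· ≠ 4) p.parts)
            rw [Multiset.sum_add, p.parts_sum] at hsplit
            rw [Multiset.map_id']
            exact (Nat.le_add_right _ _).trans_eq hsplit
    refine ⟨fun x hx => mem_congParts.2 ?_, hsum⟩
    have hwx : w x ≤ Y := (Multiset.single_le_sum (by simp) _ (Multiset.mem_map_of_mem w hx)).trans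
      hsum
    refine (hform x hx).imp_right fun ⟨j, hj⟩ => ⟨j, ?_, hj⟩
    have hj2 : j + 2 ≤ w x := by
      rw [hw, Nat.le_div_iff_mul_le (by omega)]
      omega
    omega
  have hcard : congMinusCount d 4 n ≤ Nat.card M := by
    refine Nat.card_le_card_of_injective (fun p => ⟨p.1.parts.filter (· ≠ 4), hmem p⟩) ?_
    rintro ⟨p, _⟩ ⟨p', _⟩ h
    have hfilter : p.parts.filter (· ≠ 4) = p'.parts.filter (· ≠ 4) := congrArg Subtype.val h
    have hsplit : ∀ r : n.Partition,
        Multiset.replicate (r.parts.count 4) 4 + r.parts.filter (· ≠ 4) = r.parts := fun r => by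
      rw [← Multiset.filter_eq', Multiset.filter_add_not]
    have hs := congrArg Multiset.sum (hsplit p)
    have hs' := congrArg Multiset.sum (hsplit p')
    rw [p.parts_sum, Multiset.sum_add, Multiset.sum_replicate, smul_eq_mul] at hs
    rw [p'.parts_sum, Multiset.sum_add, Multiset.sum_replicate, smul_eq_mul, ← hfilter] at hs'
    have hcount : p.parts.count 4 = p'.parts.count 4 := by omega
    refine Subtype.ext (Nat.Partition.ext ?_)
    change p.parts = p'.parts
    rw [← hsplit p, ← hsplit p', hcount, hfilter]
  refine hcard.trans ?_
  rw [Nat.card_coe_set_eq, ← Nat.cast_le (α := ℕ∞), hfin.cast_ncard_eq]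
  exact hM

theorem congMinusCount_eq_zero_s2 {d n : ℕ} (hd : 6 ≤ d) (h0 : 0 < n) (h4 : n < 4) :
    congMinusCount d 4 n = 0 := by
  have : IsEmpty {p : n.Partition //
      (∀ x ∈ p.parts, x ≡ 4 [MOD d + 3] ∨ x + 4 ≡ 0 [MOD d + 3]) ∧
      ∀ x ∈ p.parts, x ≠ d + 3 - 4} := by
    refine ⟨fun ⟨p, hcong, hne⟩ => ?_⟩
    obtain ⟨x, hx⟩ := Multiset.exists_mem_of_ne_zero (s := p.parts) fun h => by
      have := p.parts_sum
      rw [h, Multiset.sum_zero] at this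
      omega
    have hxn : x ≤ n := p.le_of_mem_parts hx
    have hpos : 0 < x := p.parts_pos hx
    rcases eq_or_of_cong hd hpos (hcong x hx) (hne x hx) with h | h | ⟨j, h⟩
    · omega
    · omega
    · have : 2 * (d + 3) ≤ (j + 2) * (d + 3) := Nat.mul_le_mul_right _ (by omega)
      omega
  exact Nat.card_of_isEmpty

theorem congMinusCount_le_one_s2 {d n : ℕ} (hd : 10 ≤ d) (hn : n < d + 10)
    (hne : d % 4 = 1 → n ≠ d + 7) : congMinusCount d 4 n ≤ 1 := by
  have hform : ∀ p : n.Partition,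
      (∀ x ∈ p.parts, x ≡ 4 [MOD d + 3] ∨ x + 4 ≡ 0 [MOD d + 3]) →
      (∀ x ∈ p.parts, x ≠ d + 3 - 4) →
      (p.parts = Multiset.replicate (n / 4) 4 ∧ n % 4 = 0) ∨ (p.parts = {d + 7} ∧ n = d + 7) := by
    intro p hcong hne
    have hpart : ∀ x ∈ p.parts, x = 4 ∨ x = d + 7 := fun x hx => by
      have hxn : x ≤ n := p.le_of_mem_parts hx
      rcases eq_or_of_cong (by omega) (p.parts_pos hx) (hcong x hx) (hne x hx) with h | h | ⟨j, h⟩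
      · exact Or.inl h
      · exact Or.inr h
      · have : 2 * (d + 3) ≤ (j + 2) * (d + 3) := Nat.mul_le_mul_right _ (by omega)
        omega
    have hsum := p.parts_sum
    by_cases hmem : d + 7 ∈ p.parts
    · right
      obtain ⟨m, hm⟩ := Multiset.exists_cons_of_mem hmem
      rw [hm, Multiset.sum_cons] at hsum
      have hm0 : m = 0 := Multiset.eq_zero_of_forall_notMem fun x hx => by
        have := Multiset.le_sum_of_mem hx
        rcases hpart x (by rw [hm]; exact Multiset.mem_cons_of_mem hx) with h | h <;> omega
      subst hm0
      exact ⟨hm, by simpa using hsum.symm⟩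
    · left
      have hrep := Multiset.eq_replicate_of_mem (s := p.parts) (a := 4) fun x hx =>
        (hpart x hx).resolve_right fun h => hmem (h ▸ hx)
      have hcard := hsum
      rw [hrep, Multiset.sum_replicate, smul_eq_mul] at hcard
      exact ⟨by rw [hrep]; congr 1; omega, by omega⟩
  rw [congMinusCount, Finite.card_le_one_iff_subsingleton]
  refine ⟨fun ⟨p, hp, hp'⟩ ⟨r, hr, hr'⟩ => Subtype.ext (Nat.Partition.ext ?_)⟩
  change p.parts = r.parts
  rcases hform p hp hp' with ⟨h, hn4⟩ | ⟨h, hn7⟩ <;>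
    rcases hform r hr hr' with ⟨h', hn4'⟩ | ⟨h', hn7'⟩
  · rw [h, h']
  · exact absurd hn7' (hne (by omega))
  · exact absurd hn7 (hne (by omega))
  · rw [h, h']

theorem congMinusCount_le_gapCount_of_le {d n : ℕ} (hd : 121 ≤ d) (hn : 3 * d + 6 ≤ n) :
    congMinusCount d 4 n ≤ gapCount d 4 n := by
  set X := n / (d + 1) with hX
  have hXn : X * (d + 1) ≤ n := Nat.div_mul_le_self _ _
  have hX3 : 3 ≤ X := (Nat.le_div_iff_mul_le (by omega)).2 (by omega)
  set m := Nat.sqrt (X + 1) with hm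
  have hm2 : 2 ≤ m := Nat.le_sqrt.2 (by omega)
  have hmX : m * m ≤ X + 1 := Nat.sqrt_le _
  have hXm : X + 1 < (m + 1) * (m + 1) := Nat.lt_succ_sqrt _
  have hupper := (congMinusCount_le_weightCount (d := d) (n := n) (Y := (m + 1) ^ 2 - 2) (by omega)
    (by rw [pow_two]; omega)).trans (weightCount_doubledWeights_le hm2)
  refine hupper.trans ((Nat.pow_le_pow_left hd _).trans ?_)
  clear_value m X
  clear hupper hm hX
  obtain ⟨k, rfl⟩ := Nat.exists_eq_add_of_le' (by omega : 1 ≤ m)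
  obtain ⟨B, rfl⟩ := Nat.exists_eq_add_of_le' (by omega : 1 ≤ d)
  rw [Nat.add_sub_cancel]
  refine pow_le_gapCount (by norm_num) ?_
  rcases (by omega : k = 1 ∨ 2 ≤ k) with rfl | hk
  · omega
  · have h1 : (k * k + 2 * k) * (B + 2) ≤ n := le_trans (Nat.mul_le_mul_right _ (by nlinarith)) hXn
    nlinarith

theorem stmt2 (d n : ℕ) (hd : (121 ≤ d ∧ d ≤ 124) ∨ 249 ≤ d) (hn : 1 ≤ n)
    (hne : d % 4 = 1 → n ≠ d + 7) :
    congMinusCount d 4 n ≤ gapCount d 4 n := by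
  have hd' : 121 ≤ d := by omega
  rcases lt_or_ge n (3 * d + 6) with h3 | h3
  · rcases lt_or_ge n (2 * d + 2) with h2 | h2
    · rcases lt_or_ge n (d + 10) with h1 | h1
      · rcases lt_or_ge n 4 with h0 | h0
        · exact (congMinusCount_eq_zero_s2 (by omega) hn h0).trans_le (Nat.zero_le _)
        · exact (congMinusCount_le_one_s2 (by omega) h1 hne).trans
            (pow_le_gapCount (B := 0) (k := 0) (by norm_num) (by omega))
      · refine (congMinusCount_le_weightCount (Y := 1) (by omega) ?_).trans (le_trans ?_
          (pow_le_gapCount (B := 1) (k := 1) (by norm_num) (by omega)))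
        · exact Nat.lt_succ_iff.1 ((Nat.div_lt_iff_lt_mul (by omega)).2 (by omega))
        · rw [weightCount_eq_getD fun w hw => doubledWeights_pos hw]
          decide
    · refine (congMinusCount_le_weightCount (Y := 3) (by omega) ?_).trans (le_trans ?_
        (pow_le_gapCount (B := 9) (k := 1) (by norm_num) (by omega)))
      · exact Nat.lt_succ_iff.1 ((Nat.div_lt_iff_lt_mul (by omega)).2 (by omega))
      · rw [weightCount_eq_getD fun w hw => doubledWeights_pos hw]
        decide
  · exact congMinusCount_le_gapCount_of_le hd' h3
end
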